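/- Let p, q ∈ (0,1) and define the Stieltjes transform m_{p,q}(z) = (1 − (p+q)/z + √(1 − (2(p+q) − 4pq)/z + (p−q)²/z²)) / (2(1−z)) for z in the upper half plane, with the square root taken with argument in [0,π). Then for every x ∈ (0,1), lim_{ω→0+} (1/π) Im m_{p,q}(x + iω) = √((1 − r_−/x)(r_+/x − 1)) / (2π(1−x)) if x ∈ (r_−, r_+), and 0 if x ∈ (0,1) \ [r_−, r_+], where r_− = (√(p(1−q)) − √(q(1−p)))² and r_+ = (√(p(1−q)) + √(q(1−p)))². -/

import Mathlib

open Filter Topology Complex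

noncomputable section

/-- The square root of a complex number whose argument lies in `[0, π)`. -/
def csqrt (z : ℂ) : ℂ :=
  if 0 ≤ (z ^ (2⁻¹ : ℂ)).im then z ^ (2⁻¹ : ℂ) else -(z ^ (2⁻¹ : ℂ))

/-- The limiting Stieltjes transform `m_{p,q}`. -/
def stieltjesPQ (p q : ℝ) (z : ℂ) : ℂ :=
  (1 - ((p : ℂ) + q) / z +
      csqrt (1 - (2 * ((p : ℂ) + q) - 4 * p * q) / z + ((p : ℂ) - q) ^ 2 / z ^ 2)) /
    (2 * (1 - z))

def rMinus (p q : ℝ) : ℝ := (Real.sqrt (p * (1 - q)) - Real.sqrt (q * (1 - p))) ^ 2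
def rPlus (p q : ℝ) : ℝ := (Real.sqrt (p * (1 - q)) + Real.sqrt (q * (1 - p))) ^ 2

/-!
The square root with argument in `[0, π)` jumps across the positive real axis, but its imaginary
part `√((‖w‖ - Re w) / 2)` and its norm `√‖w‖` are continuous in `w` on all of `ℂ`. As `z` tends to
a real `x`, the denominator `2 (1 - z)` becomes real, so the real part of the root enters the
imaginary part of the quotient only as a bounded quantity times a quantity tending to `0`. The
radicand factors as `(1 - r₋ / z) (1 - r₊ / z)`; hence `Im m_{p,q}` tends to
`√(-(1 - r₋ / x) (1 - r₊ / x)) / (2 (1 - x))`, where the root of a negative number is read as `0`.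
-/

lemma csqrt_sq (w : ℂ) : csqrt w ^ 2 = w := by
  have h : (w ^ (2⁻¹ : ℂ)) ^ 2 = w := by simp
  unfold csqrt
  split_ifs
  · exact h
  · rw [neg_sq, h]

lemma norm_csqrt (w : ℂ) : ‖csqrt w‖ = √‖w‖ := by
  rw [← Real.sqrt_sq (norm_nonneg (csqrt w)), ← norm_pow, csqrt_sq]

lemma csqrt_im (w : ℂ) : (csqrt w).im = √((‖w‖ - w.re) / 2) := by
  rw [← abs_cpow_inv_two_im]
  unfold csqrt
  split_ifs with h
  · exact (abs_of_nonneg h).symm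
  · rw [neg_im, abs_of_neg (not_le.1 h)]

lemma continuous_csqrt_im : Continuous fun w => (csqrt w).im := by
  simp_rw [csqrt_im]
  fun_prop

lemma csqrt_ofReal_im (c : ℝ) : (csqrt c).im = √(-c) := by
  rw [csqrt_im, norm_real, ofReal_re, Real.norm_eq_abs]
  rcases le_total 0 c with hc | hc
  · rw [abs_of_nonneg hc, sub_self, zero_div, Real.sqrt_zero,
      Real.sqrt_eq_zero_of_nonpos (neg_nonpos.2 hc)]
  · rw [abs_of_nonpos hc]
    congr 1
    ring

lemma tendsto_im_mul_of_isBoundedUnder_norm {α : Type*} {l : Filter α} {f g : α → ℂ} {y b : ℝ}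
    (hf : l.IsBoundedUnder (· ≤ ·) fun t => ‖f t‖)
    (hf_im : Tendsto (fun t => (f t).im) l (𝓝 y)) (hg : Tendsto g l (𝓝 (b : ℂ))) :
    Tendsto (fun t => (f t * g t).im) l (𝓝 (y * b)) := by
  have hg_re : Tendsto (fun t => (g t).re) l (𝓝 b) := (continuous_re.tendsto _).comp hg
  have hg_im : Tendsto (fun t => (g t).im) l (𝓝 0) := (continuous_im.tendsto _).comp hg
  have hf_re : l.IsBoundedUnder (· ≤ ·) fun t => ‖(f t).re‖ :=
    hf.mono_le (Eventually.of_forall fun t => abs_re_le_norm (f t))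
  have hcross : Tendsto (fun t => (f t).re * (g t).im) l (𝓝 0) :=
    isBoundedUnder_le_mul_tendsto_zero hf_re hg_im
  simpa only [mul_im, zero_add] using hcross.add (hf_im.mul hg_re)

lemma tendsto_im_add_csqrt_div {α : Type*} {l : Filter α} {f w d : α → ℂ} {a b c : ℝ} (hb : b ≠ 0)
    (hf : Tendsto f l (𝓝 (a : ℂ))) (hw : Tendsto w l (𝓝 (c : ℂ)))
    (hd : Tendsto d l (𝓝 (b : ℂ))) :
    Tendsto (fun t => ((f t + csqrt (w t)) / d t).im) l (𝓝 (√(-c) / b)) := by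
  have hbdd : l.IsBoundedUnder (· ≤ ·) fun t => ‖f t + csqrt (w t)‖ := by
    refine (hf.norm.add hw.norm.sqrt).isBoundedUnder_le.mono_le (Eventually.of_forall fun t => ?_)
    simpa only [norm_csqrt] using norm_add_le (f t) (csqrt (w t))
  have him : Tendsto (fun t => (f t + csqrt (w t)).im) l (𝓝 √(-c)) := by
    have h := ((continuous_im.tendsto _).comp hf).add ((continuous_csqrt_im.tendsto _).comp hw)
    simpa only [Function.comp_def, add_im, ofReal_im, csqrt_ofReal_im, zero_add] using h
  have hinv : Tendsto (fun t => (d t)⁻¹) l (𝓝 ((b⁻¹ : ℝ) : ℂ)) := by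
    rw [ofReal_inv]
    exact hd.inv₀ (ofReal_ne_zero.2 hb)
  simpa only [div_eq_mul_inv] using tendsto_im_mul_of_isBoundedUnder_norm hbdd him hinv

lemma tendsto_add_ofReal_mul_I_nhdsGT_zero (z : ℂ) :
    Tendsto (fun ω : ℝ => z + ω * I) (𝓝[>] 0) (𝓝 z) := by
  have h : Continuous fun ω : ℝ => z + ω * I := by fun_prop
  simpa only [ofReal_zero, zero_mul, add_zero] using (h.tendsto 0).mono_left nhdsWithin_le_nhds

section

variable {p q : ℝ}

lemma rMinus_add_rPlus (hpq : 0 ≤ p * (1 - q)) (hqp : 0 ≤ q * (1 - p)) :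
    rMinus p q + rPlus p q = 2 * (p + q) - 4 * p * q := by
  unfold rMinus rPlus
  linear_combination 2 * Real.sq_sqrt hpq + 2 * Real.sq_sqrt hqp

lemma rMinus_mul_rPlus (hpq : 0 ≤ p * (1 - q)) (hqp : 0 ≤ q * (1 - p)) :
    rMinus p q * rPlus p q = (p - q) ^ 2 :=
  calc rMinus p q * rPlus p q = (√(p * (1 - q)) ^ 2 - √(q * (1 - p)) ^ 2) ^ 2 := by
        unfold rMinus rPlus
        ring
    _ = (p - q) ^ 2 := by
        rw [Real.sq_sqrt hpq, Real.sq_sqrt hqp]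
        ring

lemma rMinus_le_rPlus (p q : ℝ) : rMinus p q ≤ rPlus p q := by
  have h := mul_nonneg (Real.sqrt_nonneg (p * (1 - q))) (Real.sqrt_nonneg (q * (1 - p)))
  unfold rMinus rPlus
  linarith

lemma stieltjesPQ_eq (hpq : 0 ≤ p * (1 - q)) (hqp : 0 ≤ q * (1 - p)) (z : ℂ) :
    stieltjesPQ p q z = (1 - ((p : ℂ) + q) / z +
      csqrt ((1 - rMinus p q / z) * (1 - rPlus p q / z))) / (2 * (1 - z)) := by
  have hadd : (rMinus p q + rPlus p q : ℂ) = 2 * (p + q) - 4 * p * q :=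
    mod_cast rMinus_add_rPlus hpq hqp
  have hmul : (rMinus p q * rPlus p q : ℂ) = (p - q) ^ 2 := mod_cast rMinus_mul_rPlus hpq hqp
  rw [stieltjesPQ, ← hadd, ← hmul]
  ring_nf

/-- The boundary value of `Im m_{p,q} / π` on the real line: for `p, q ∈ (0, 1)`, the density on
`(0, 1)` of the measure with Stieltjes transform `m_{p,q}`. The indicator makes the value `0`
outside `(r₋, r₊)` explicit instead of leaving it to `√` of a nonpositive number. -/
def densityPQ (p q : ℝ) : ℝ → ℝ :=
  (Set.Ioo (rMinus p q) (rPlus p q)).indicator fun x =>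
    √((1 - rMinus p q / x) * (rPlus p q / x - 1)) / (2 * Real.pi * (1 - x))

lemma densityPQ_of_mem_Ioo {x : ℝ} (hx : x ∈ Set.Ioo (rMinus p q) (rPlus p q)) :
    densityPQ p q x =
      √((1 - rMinus p q / x) * (rPlus p q / x - 1)) / (2 * Real.pi * (1 - x)) :=
  Set.indicator_of_mem hx _

lemma densityPQ_of_notMem_Ioo {x : ℝ} (hx : x ∉ Set.Ioo (rMinus p q) (rPlus p q)) :
    densityPQ p q x = 0 :=
  Set.indicator_of_notMem hx _

lemma densityPQ_radicand_nonpos {x : ℝ} (hx0 : x ≠ 0)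
    (hx : x ∉ Set.Ioo (rMinus p q) (rPlus p q)) :
    (1 - rMinus p q / x) * (rPlus p q / x - 1) ≤ 0 := by
  have hfac : (1 - rMinus p q / x) * (rPlus p q / x - 1) =
      (x - rMinus p q) * (rPlus p q - x) / x ^ 2 := by
    field_simp
  rw [hfac]
  refine div_nonpos_of_nonpos_of_nonneg ?_ (sq_nonneg x)
  rcases le_or_gt x (rMinus p q) with hle | hgt
  · exact mul_nonpos_of_nonpos_of_nonneg (sub_nonpos.2 hle)
      (sub_nonneg.2 (hle.trans (rMinus_le_rPlus p q)))
  · exact mul_nonpos_of_nonneg_of_nonpos (sub_nonneg.2 hgt.le)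
      (sub_nonpos.2 (not_lt.1 fun hlt => hx ⟨hgt, hlt⟩))

lemma densityPQ_eq {x : ℝ} (hx0 : x ≠ 0) :
    densityPQ p q x =
      √((1 - rMinus p q / x) * (rPlus p q / x - 1)) / (2 * Real.pi * (1 - x)) := by
  by_cases hx : x ∈ Set.Ioo (rMinus p q) (rPlus p q)
  · exact densityPQ_of_mem_Ioo hx
  · rw [densityPQ_of_notMem_Ioo hx,
      Real.sqrt_eq_zero_of_nonpos (densityPQ_radicand_nonpos hx0 hx), zero_div]

lemma tendsto_stieltjesPQ_im (hpq : 0 ≤ p * (1 - q)) (hqp : 0 ≤ q * (1 - p)) {x : ℝ}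
    (hx0 : x ≠ 0) (hx1 : x ≠ 1) :
    Tendsto (fun z => (stieltjesPQ p q z).im) (𝓝 (x : ℂ))
      (𝓝 (√(-((1 - rMinus p q / x) * (1 - rPlus p q / x))) / (2 * (1 - x)))) := by
  have hdiv (c : ℂ) : Tendsto (fun z => 1 - c / z) (𝓝 (x : ℂ)) (𝓝 (1 - c / x)) :=
    (tendsto_const_nhds.div tendsto_id (ofReal_ne_zero.2 hx0)).const_sub 1
  have hden : Tendsto (fun z : ℂ => 2 * (1 - z)) (𝓝 (x : ℂ)) (𝓝 (2 * (1 - x))) :=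
    (tendsto_id.const_sub 1).const_mul 2
  have hden0 : 2 * (1 - x) ≠ 0 := mul_ne_zero two_ne_zero (sub_ne_zero.2 hx1.symm)
  simp_rw [stieltjesPQ_eq hpq hqp]
  refine tendsto_im_add_csqrt_div (a := 1 - (p + q) / x) hden0 ?_ ?_ ?_
  · exact mod_cast hdiv (p + q)
  · exact mod_cast (hdiv (rMinus p q)).mul (hdiv (rPlus p q))
  · exact mod_cast hden

end

theorem stmt16_general {p q x : ℝ} (hpq : 0 ≤ p * (1 - q)) (hqp : 0 ≤ q * (1 - p)) (hx0 : x ≠ 0)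
    (hx1 : x ≠ 1) :
    Tendsto (fun z => (1 / Real.pi) * (stieltjesPQ p q z).im) (𝓝 (x : ℂ))
      (𝓝 (densityPQ p q x)) := by
  convert (tendsto_stieltjesPQ_im hpq hqp hx0 hx1).const_mul (1 / Real.pi) using 2
  rw [densityPQ_eq hx0, neg_mul_eq_mul_neg, neg_sub, div_mul_div_comm, one_mul]
  ring_nf

theorem stmt16 (p q : ℝ) (hp : p ∈ Set.Ioo (0 : ℝ) 1) (hq : q ∈ Set.Ioo (0 : ℝ) 1) :
    ∀ x ∈ Set.Ioo (0 : ℝ) 1,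
      (x ∈ Set.Ioo (rMinus p q) (rPlus p q) →
        Tendsto (fun ω : ℝ => (1 / Real.pi) * (stieltjesPQ p q ((x : ℂ) + ω * Complex.I)).im)
          (𝓝[>] 0)
          (𝓝 (Real.sqrt ((1 - rMinus p q / x) * (rPlus p q / x - 1)) /
            (2 * Real.pi * (1 - x))))) ∧
      (x ∉ Set.Icc (rMinus p q) (rPlus p q) →
        Tendsto (fun ω : ℝ => (1 / Real.pi) * (stieltjesPQ p q ((x : ℂ) + ω * Complex.I)).im)
          (𝓝[>] 0) (𝓝 0)) := by
  intro x hx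
  have h := (stmt16_general (mul_nonneg hp.1.le (sub_nonneg.2 hq.2.le))
    (mul_nonneg hq.1.le (sub_nonneg.2 hp.2.le)) hx.1.ne' hx.2.ne).comp
    (tendsto_add_ofReal_mul_I_nhdsGT_zero x)
  exact ⟨fun hmem => densityPQ_of_mem_Ioo hmem ▸ h,
    fun hout => densityPQ_of_notMem_Ioo (mt (Set.Ioo_subset_Icc_self ·) hout) ▸ h⟩

end
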